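/- arXiv:1601.01324 — 3 statements merged into one kernel-verified Lean document; each statement's English description precedes it below -/
import Mathlib

section
/- Let d be a positive integer and let f be a zero-sum free multiset over ℤ_d. Then for every x ∈ ℤ_d, the spectrum strictly increases when the singleton x is adjoined: sp(f) is a strict subset of sp(f + {x}). -/
/-- The spectrum of a multiset over `ZMod d`: the set of all sums of nonempty submultisets. -/
def mspec {d : ℕ} (f : Multiset (ZMod d)) : Set (ZMod d) :=
  {s | ∃ g : Multiset (ZMod d), g ≤ f ∧ g ≠ 0 ∧ g.sum = s}

/-- A multiset over `ZMod d` is zero-sum free if no nonempty submultiset sums to `0`. -/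
def ZeroSumFree {d : ℕ} (f : Multiset (ZMod d)) : Prop :=
  (0 : ZMod d) ∉ mspec f

/-- The spectrum of a zero-sum free multiset over `ℤ_d` strictly increases when
adjoining any singleton. -/
theorem spectrum_strict_increase (d : ℕ) (hd : 0 < d) (f : Multiset (ZMod d))
    (hf : ZeroSumFree f) (x : ZMod d) :
    mspec f ⊂ mspec (x ::ₘ f) := by
  have hsub : mspec f ⊆ mspec (x ::ₘ f) := by
    rintro s ⟨g, hg, h0, rfl⟩
    exact ⟨g, hg.trans (Multiset.le_cons_self f x), h0, rfl⟩
  refine ⟨hsub, fun h => hf ?_⟩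
  have key : ∀ n : ℕ, (n + 1) • x ∈ mspec f := by
    intro n
    induction n with
    | zero =>
      apply h
      exact ⟨{x}, by simp, by simp, by simp⟩
    | succ k ih =>
      obtain ⟨g, hg, h0, hs⟩ := ih
      apply h
      refine ⟨x ::ₘ g, Multiset.cons_le_cons x hg, Multiset.cons_ne_zero, ?_⟩
      rw [Multiset.sum_cons, hs, succ_nsmul' x (k + 1)]
  have h1 := key (d - 1)
  rw [Nat.sub_add_cancel hd] at h1
  simpa using h1
end

section
/- Let d be a positive integer and let f be a multiset of natural numbers all of whose elements are strictly less than d, such that no nonempty submultiset of f has sum divisible by d. Then the (integer) sum of all elements of f is at most (d − 1)². -/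
/-- A multiset of natural numbers is zero-sum free modulo `d` if no nonempty submultiset
has sum divisible by `d`. -/
def ZeroSumFreeMod (d : ℕ) (f : Multiset ℕ) : Prop :=
  ∀ g : Multiset ℕ, g ≤ f → g ≠ 0 → ¬ (d ∣ g.sum)

theorem card_lt_of_zsf (d : ℕ) (hd : 0 < d) (f : Multiset ℕ)
    (hf : ZeroSumFreeMod d f) : f.card ≤ d - 1 := by
  by_contra hc
  have hcard : d ≤ f.card := by omega
  induction f using Quotient.inductionOn with
  | _ l =>
  have hl : d ≤ l.length := by simpa using hcard
  have key : ∀ i j, i < j → j ≤ d → (l.take i).sum % d = (l.take j).sum % d → False := by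
    intro i j hij hj h
    have hsplit : l.take j = l.take i ++ (l.take j).drop i := by
      conv_lhs => rw [← List.take_append_drop i (l.take j)]
      rw [List.take_take, min_eq_left hij.le]
    refine hf (((l.take j).drop i : List ℕ) : Multiset ℕ) ?_ ?_ ?_
    · exact ((List.drop_sublist _ _).trans (List.take_sublist _ _)).subperm
    · intro h0
      have := congrArg Multiset.card h0
      simp at this
      omega
    · rw [Multiset.sum_coe]
      have hs : (l.take j).sum = (l.take i).sum + ((l.take j).drop i).sum := by
        rw [← List.sum_append, ← hsplit]
      have h2 := (Nat.modEq_iff_dvd' (by omega)).1 (show (l.take i).sum ≡ (l.take j).sum [MOD d] from h)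
      rwa [hs, Nat.add_sub_cancel_left] at h2
  obtain ⟨i, hi, j, hj, hne, he⟩ := Finset.exists_ne_map_eq_of_card_lt_of_maps_to
    (s := Finset.range (d + 1)) (t := Finset.range d) (f := fun i => (l.take i).sum % d)
    (by simp) (by intro i _; simpa using Nat.mod_lt _ hd)
  simp only [Finset.mem_range] at hi hj
  rcases lt_or_gt_of_ne hne with h | h
  · exact key i j h (by omega) he
  · exact key j i h (by omega) he.symm

/-- A multiset of naturals, all `< d`, with no nonempty submultiset summing to `0` mod `d`,
has total (integer) sum at most `(d - 1)²`. -/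
theorem sum_le_of_zeroSumFreeMod (d : ℕ) (hd : 0 < d) (f : Multiset ℕ)
    (hlt : ∀ a ∈ f, a < d) (hf : ZeroSumFreeMod d f) :
    f.sum ≤ (d - 1) ^ 2 := by
  have h1 := Multiset.sum_le_card_nsmul f (d - 1) (fun a ha => by have := hlt a ha; omega)
  have h2 := card_lt_of_zsf d hd f hf
  rw [smul_eq_mul] at h1
  calc f.sum ≤ f.card * (d - 1) := h1
    _ ≤ (d - 1) * (d - 1) := Nat.mul_le_mul_right _ h2
    _ = (d - 1) ^ 2 := (sq _).symm
end

section
/- Let d be a positive integer. The maximal integer sum of a multiset of natural numbers with all elements strictly less than d and no nonempty submultiset summing to 0 modulo d equals (d − 1)²: every such multiset has sum at most (d − 1)², and the multiset consisting of the element d − 1 with multiplicity d − 1 has no nonempty submultiset summing to 0 modulo d and has sum exactly (d − 1)². -/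
theorem card_le_of_zeroSumFreeMod (d : ℕ) (hd : 0 < d) (f : Multiset ℕ)
    (hz : ZeroSumFreeMod d f) : f.card ≤ d - 1 := by
  induction f using Quotient.inductionOn with
  | h l =>
  change l.length ≤ d - 1
  by_contra hlt
  have key : ∀ i j, i < j → j ≤ d → (l.take i).sum % d = (l.take j).sum % d → False := by
    intro i j hij hj h
    have hsplit : (l.take j).sum = (l.take i).sum + ((l.take j).drop i).sum := by
      rw [← List.sum_take_add_sum_drop (l.take j) i, List.take_take, min_eq_left hij.le]
    refine hz (((l.take j).drop i : List ℕ) : Multiset ℕ) ?_ ?_ ?_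
    · exact ((List.drop_sublist _ _).trans (List.take_sublist _ _)).subperm
    · intro h0
      have := congrArg Multiset.card h0
      simp at this
      omega
    · rw [Multiset.sum_coe]
      have := (Nat.modEq_iff_dvd' (by omega)).1 (show (l.take i).sum ≡ (l.take j).sum [MOD d] from h)
      rwa [hsplit, Nat.add_sub_cancel_left] at this
  obtain ⟨i, hi, j, hj, hne, h⟩ := Finset.exists_ne_map_eq_of_card_lt_of_maps_to
    (s := Finset.range (d + 1)) (t := Finset.range d) (by simp)
    (f := fun i => (l.take i).sum % d) (fun i _ => by simpa using Nat.mod_lt _ hd)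
  simp only [Finset.mem_range] at hi hj
  rcases lt_or_gt_of_ne hne with h' | h'
  · exact key i j h' (by omega) h
  · exact key j i h' (by omega) h.symm

/-- The maximal integer sum of a multiset of naturals with all elements `< d` and no
nonempty submultiset summing to `0` mod `d` equals `(d-1)²`: every such multiset has sum
at most `(d-1)²`, and the multiset of `d-1` copies of `d-1` is zero-sum free mod `d`
with sum exactly `(d-1)²`. -/
theorem max_sum_zeroSumFreeMod (d : ℕ) (hd : 0 < d) :
    (∀ f : Multiset ℕ, (∀ a ∈ f, a < d) → ZeroSumFreeMod d f → f.sum ≤ (d - 1) ^ 2) ∧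
    ZeroSumFreeMod d (Multiset.replicate (d - 1) (d - 1)) ∧
    (Multiset.replicate (d - 1) (d - 1)).sum = (d - 1) ^ 2 := by
  refine ⟨fun f hf hz => ?_, ?_, ?_⟩
  · have h1 := Multiset.sum_le_card_nsmul f (d - 1) (fun a ha => Nat.le_sub_one_of_lt (hf a ha))
    have h2 : f.card ≤ d - 1 := card_le_of_zeroSumFreeMod d hd f hz
    rw [smul_eq_mul] at h1
    calc f.sum ≤ f.card * (d - 1) := h1
      _ ≤ (d - 1) * (d - 1) := Nat.mul_le_mul_right _ h2
      _ = (d - 1) ^ 2 := by ring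
  · intro g hg h0 hdvd
    obtain ⟨m, hm, rfl⟩ := Multiset.le_replicate_iff.1 hg
    rw [Multiset.sum_replicate, smul_eq_mul] at hdvd
    have hc : Nat.Coprime d (d - 1) := by
      obtain ⟨k, rfl⟩ : ∃ k, d = k + 1 := ⟨d - 1, by omega⟩
      simp
    have h3 := hc.dvd_of_dvd_mul_right hdvd
    have hm0 : m ≠ 0 := by
      rintro rfl
      exact h0 (by simp)
    have := Nat.le_of_dvd (Nat.pos_of_ne_zero hm0) h3
    omega
  · rw [Multiset.sum_replicate, smul_eq_mul, sq]
end
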